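/- Let S_n be the star with central vertex r and leaves V', let 𝒫 be a path cover of a graph on V' (a set of vertex-disjoint simple paths covering all of V'), and let G = S_n + 𝒫 be the unweighted graph obtained by adding all edges of the paths of 𝒫 to S_n. Let u, v ∈ V' with u ≠ v. If u is an interior vertex of some path of 𝒫 (i.e., u lies on a path of 𝒫 and is not an endpoint of that path), and v is an isolated vertex of 𝒫 (a path of length 0), then the effective resistance satisfies R_G(u,v) ≤ 3/2. -/

import Mathlib

open Matrix

/-- The Laplacian matrix of a weighted graph given by a weight function. -/
def lapG {V : Type*} [Fintype V] [DecidableEq V] (W : V → V → ℝ) : Matrix V V ℝ :=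
  fun i j => if i = j then ∑ k, W i k else -(W i j)

/-- The star graph `S_n`: the central vertex is `Fin.last n`, joined to the `n`
leaves `0, …, n-1` by unit-weight edges. -/
def starW (n : ℕ) : Fin (n + 1) → Fin (n + 1) → ℝ :=
  fun i j => if i ≠ j ∧ (i = Fin.last n ∨ j = Fin.last n) then 1 else 0

/-- The star `S_n` plus, for each list `l ∈ Ps` of leaves, the path consisting of
unit-weight edges between consecutive vertices of `l`. -/
def starPlusPaths (n : ℕ) (Ps : List (List (Fin n))) : Fin (n + 1) → Fin (n + 1) → ℝ :=
  fun i j => starW n i j +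
    if ∃ a b : Fin n, i = a.castSucc ∧ j = b.castSucc ∧
        ∃ l ∈ Ps, ((a, b) ∈ l.zip l.tail ∨ (b, a) ∈ l.zip l.tail) then 1 else 0

/-- `Ps` is a path cover of the leaf set: each member is a nonempty duplicate-free
list of leaves, the members are pairwise vertex-disjoint, and every leaf is covered. -/
def IsPathCover (n : ℕ) (Ps : List (List (Fin n))) : Prop :=
  (∀ l ∈ Ps, l ≠ [] ∧ l.Nodup) ∧
    Ps.Pairwise (fun l₁ l₂ => ∀ x ∈ l₁, x ∉ l₂) ∧
    (∀ v : Fin n, ∃ l ∈ Ps, v ∈ l)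

/-!
A potential `x` driving a unit current from `u` to `v` has energy `x u - x v`, and this energy is
at least that of `x` on any subnetwork. Take as subnetwork the edge `r v` in series with a parallel
bundle between `u` and `r`: the edge `u r`, of conductance `1`, and one two-edge path of
conductance `1 / 2` through each of a set of common neighbours of `u` and `r`. Minimising the energy
of these edges gives `x u - x v ≤ 1 + (1 + m / 2)⁻¹` for `m` common neighbours, and an interior
vertex of a path has two of them. When `v` is itself one of these neighbours the bundle and the edge
`r v` overlap, but then the edge `u v` alone gives `x u - x v ≤ 1`.
-/

section WeightedGraph

variable {V : Type*} [Fintype V] {W : V → V → ℝ}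

/-- The Dirichlet energy of the potential `x` on a weighted graph, i.e. the power dissipated by the
current it induces. The sum runs over ordered pairs, hence the factor `1 / 2`. -/
noncomputable def dirichletEnergy (W : V → V → ℝ) (x : V → ℝ) : ℝ :=
  (∑ i, ∑ k, W i k * (x i - x k) ^ 2) / 2

lemma lapG_mulVec_apply [DecidableEq V] (hloop : ∀ i, W i i = 0) (x : V → ℝ) (i : V) :
    (lapG W *ᵥ x) i = ∑ k, W i k * (x i - x k) := by
  have hentry (k : V) :
      lapG W i k * x k = (if i = k then (∑ j, W i j) * x i else 0) - W i k * x k := by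
    unfold lapG
    split_ifs with hik
    · simp [← hik, hloop]
    · ring
  simp [mulVec, dotProduct, hentry, Finset.sum_sub_distrib, mul_sub, Finset.sum_mul]

lemma dotProduct_lapG_mulVec [DecidableEq V] (hsymm : ∀ i k, W i k = W k i)
    (hloop : ∀ i, W i i = 0) (x : V → ℝ) :
    x ⬝ᵥ lapG W *ᵥ x = dirichletEnergy W x := by
  have hexpand : x ⬝ᵥ lapG W *ᵥ x = ∑ i, ∑ k, W i k * (x i * (x i - x k)) := by
    simp only [dotProduct, lapG_mulVec_apply hloop, Finset.mul_sum, mul_left_comm]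
  have hswap : x ⬝ᵥ lapG W *ᵥ x = ∑ i, ∑ k, W i k * (x k * (x k - x i)) := by
    rw [hexpand, Finset.sum_comm]
    simp only [hsymm]
  rw [dirichletEnergy, eq_div_iff two_ne_zero, mul_two]
  nth_rw 1 [hexpand]
  rw [hswap]
  simp only [← Finset.sum_add_distrib]
  exact Finset.sum_congr rfl fun i _ => Finset.sum_congr rfl fun k _ => by ring

lemma sub_eq_dirichletEnergy [DecidableEq V] (hsymm : ∀ i k, W i k = W k i)
    (hloop : ∀ i, W i i = 0) {u v : V} {x : V → ℝ}
    (hx : lapG W *ᵥ x = Pi.single u 1 - Pi.single v 1) :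
    x u - x v = dirichletEnergy W x := by
  simp [← dotProduct_lapG_mulVec hsymm hloop, hx, dotProduct_sub]

lemma sum_le_dirichletEnergy (hsymm : ∀ i k, W i k = W k i) (hnonneg : ∀ i k, 0 ≤ W i k)
    {F : Finset (V × V)} (hF : ∀ e ∈ F, e.swap ∉ F) (x : V → ℝ) :
    ∑ e ∈ F, W e.1 e.2 * (x e.1 - x e.2) ^ 2 ≤ dirichletEnergy W x := by
  let f : V × V → ℝ := fun e => W e.1 e.2 * (x e.1 - x e.2) ^ 2
  let F' := F.map (Equiv.prodComm V V).toEmbedding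
  have hdisj : Disjoint F F' := by
    refine Finset.disjoint_right.mpr fun e he => ?_
    obtain ⟨e', he', rfl⟩ := Finset.mem_map.mp he
    exact hF e' he'
  have hreverse : ∑ e ∈ F', f e = ∑ e ∈ F, f e := by
    refine (Finset.sum_map ..).trans (Finset.sum_congr rfl fun e _ => ?_)
    simp [f, hsymm e.2, sub_sq_comm (x e.2)]
  have hsubset : ∑ e ∈ F.disjUnion F' hdisj, f e ≤ ∑ e, f e :=
    Finset.sum_le_univ_sum_of_nonneg fun e => mul_nonneg (hnonneg ..) (sq_nonneg _)
  rw [Finset.sum_disjUnion, hreverse, Fintype.sum_prod_type] at hsubset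
  rw [dirichletEnergy, le_div_iff₀ two_pos, mul_two]
  exact hsubset

lemma mul_sq_sub_le_dirichletEnergy (hsymm : ∀ i k, W i k = W k i) (hnonneg : ∀ i k, 0 ≤ W i k)
    {u v : V} (huv : u ≠ v) (x : V → ℝ) :
    W u v * (x u - x v) ^ 2 ≤ dirichletEnergy W x := by
  simpa only [Finset.sum_singleton] using
    sum_le_dirichletEnergy hsymm hnonneg (F := {(u, v)}) (by simp [huv.symm]) x

lemma sum_add_sum_le_dirichletEnergy (hsymm : ∀ i k, W i k = W k i) (hnonneg : ∀ i k, 0 ≤ W i k)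
    {u r : V} {N M : Finset V} (hur : u ≠ r) (huN : u ∉ N) (huM : u ∉ M) (hrM : r ∉ M)
    (x : V → ℝ) :
    ∑ k ∈ N, W u k * (x u - x k) ^ 2 + ∑ k ∈ M, W k r * (x k - x r) ^ 2 ≤
      dirichletEnergy W x := by
  have hdisj : Disjoint ({u} ×ˢ N) (M ×ˢ {r}) :=
    Finset.disjoint_product.mpr (.inl (Finset.disjoint_singleton_left.mpr huM))
  have horiented : ∀ e ∈ ({u} ×ˢ N).disjUnion (M ×ˢ {r}) hdisj,
      e.swap ∉ ({u} ×ˢ N).disjUnion (M ×ˢ {r}) hdisj := by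
    rintro ⟨i, k⟩
    simp only [Finset.mem_disjUnion, Finset.mem_product, Finset.mem_singleton, Prod.swap_prod_mk]
    grind
  have hedges := sum_le_dirichletEnergy hsymm hnonneg horiented x
  simpa only [Finset.sum_disjUnion, Finset.sum_product, Finset.sum_singleton] using hedges

lemma sub_le_inv_weight [DecidableEq V] (hsymm : ∀ i k, W i k = W k i)
    (hloop : ∀ i, W i i = 0) (hnonneg : ∀ i k, 0 ≤ W i k) {u v : V} (hW : 0 < W u v) {x : V → ℝ}
    (hx : lapG W *ᵥ x = Pi.single u 1 - Pi.single v 1) :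
    x u - x v ≤ (W u v)⁻¹ := by
  have huv : u ≠ v := by
    rintro rfl
    exact hW.ne' (hloop u)
  have henergy := mul_sq_sub_le_dirichletEnergy hsymm hnonneg huv x
  rw [← sub_eq_dirichletEnergy hsymm hloop hx] at henergy
  have hyoung := two_mul_le_add_mul_sq hW (a := x u - x v) (b := 1)
  linarith

lemma mul_sq_sub_add_sq_sub_le_dirichletEnergy (hsymm : ∀ i k, W i k = W k i)
    (hloop : ∀ i, W i i = 0) (hnonneg : ∀ i k, 0 ≤ W i k) {r u v : V} {A : Finset V}
    (huv : u ≠ v) (hvA : v ∉ A) (hur : 1 ≤ W u r) (hvr : 1 ≤ W v r)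
    (hA : ∀ a ∈ A, 1 ≤ W u a ∧ 1 ≤ W a r) (x : V → ℝ) :
    (1 + A.card / 2) * (x u - x r) ^ 2 + (x r - x v) ^ 2 ≤ dirichletEnergy W x := by
  classical
  have hne {i k : V} (hW : 1 ≤ W i k) : i ≠ k := by
    rintro rfl
    linarith [hloop i]
  have huA : u ∉ A := fun h => hne (hA u h).1 rfl
  have hrA : r ∉ A := fun h => hne (hA r h).2 rfl
  have hstars := sum_add_sum_le_dirichletEnergy hsymm hnonneg (N := insert r A) (M := insert v A)
    (hne hur) (by simp [hne hur, huA]) (by simp [huv, huA]) (by simp [(hne hvr).symm, hrA]) x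
  rw [Finset.sum_insert hrA, Finset.sum_insert hvA] at hstars
  have hseries : A.card * ((x u - x r) ^ 2 / 2) ≤
      ∑ a ∈ A, W u a * (x u - x a) ^ 2 + ∑ a ∈ A, W a r * (x a - x r) ^ 2 := by
    rw [← Finset.sum_add_distrib, ← nsmul_eq_mul]
    refine A.card_nsmul_le_sum _ _ fun a ha => ?_
    have hua := le_mul_of_one_le_left (sq_nonneg (x u - x a)) (hA a ha).1
    have har := le_mul_of_one_le_left (sq_nonneg (x a - x r)) (hA a ha).2
    linarith [sq_nonneg (x u - x a - (x a - x r))]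
  have hur_edge := le_mul_of_one_le_left (sq_nonneg (x u - x r)) hur
  have hvr_edge := le_mul_of_one_le_left (sq_nonneg (x v - x r)) hvr
  linarith [sub_sq_comm (x r) (x v)]

theorem sub_le_one_add_inv_of_common_neighbors [DecidableEq V] (hsymm : ∀ i k, W i k = W k i)
    (hloop : ∀ i, W i i = 0) (hnonneg : ∀ i k, 0 ≤ W i k) {r u v : V} {A : Finset V}
    (hur : 1 ≤ W u r) (hvr : 1 ≤ W v r) (hA : ∀ a ∈ A, 1 ≤ W u a ∧ 1 ≤ W a r) {x : V → ℝ}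
    (hx : lapG W *ᵥ x = Pi.single u 1 - Pi.single v 1) :
    x u - x v ≤ 1 + (1 + A.card / 2 : ℝ)⁻¹ := by
  have hinv : 0 ≤ (1 + A.card / 2 : ℝ)⁻¹ := by positivity
  by_cases huv : u = v
  · rw [huv, sub_self]
    linarith
  by_cases hvA : v ∈ A
  · have hWuv := (hA v hvA).1
    linarith [sub_le_inv_weight hsymm hloop hnonneg (one_pos.trans_le hWuv) hx,
      inv_le_one_of_one_le₀ hWuv]
  have henergy :=
    mul_sq_sub_add_sq_sub_le_dirichletEnergy hsymm hloop hnonneg huv hvA hur hvr hA x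
  rw [← sub_eq_dirichletEnergy hsymm hloop hx] at henergy
  have hbundle :=
    two_mul_le_add_mul_sq (ε := 1 + (A.card : ℝ) / 2) (a := x u - x r) (b := 1) (by positivity)
  have hpendant := two_mul_le_add_sq (x r - x v) 1
  linarith

end WeightedGraph

section ConsecutiveEntries

variable {α : Type*}

lemma mem_zip_tail_iff_infix {l : List α} {a b : α} :
    (a, b) ∈ l.zip l.tail ↔ [a, b] <:+: l := by
  induction l with
  | nil => simp
  | cons c l ih =>
    cases l with
    | nil => simp [List.infix_cons_iff]
    | cons d l =>
      rw [List.infix_cons_iff, ← ih]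
      simp [List.cons_prefix_cons]

lemma exists_infix_of_ne_head_of_ne_getLast {l : List α} {u : α} (hu : u ∈ l) (hl : l ≠ [])
    (hhead : u ≠ l.head hl) (hlast : u ≠ l.getLast hl) : ∃ a b, [a, u, b] <:+: l := by
  obtain ⟨s, t, rfl⟩ := List.append_of_mem hu
  rcases List.eq_nil_or_concat s with rfl | ⟨s, a, rfl⟩
  · simp at hhead
  rcases t with _ | ⟨b, t⟩
  · simp at hlast
  exact ⟨a, b, s, t, by simp⟩

end ConsecutiveEntries

section StarPlusPaths

variable {n : ℕ} {Ps : List (List (Fin n))}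

lemma starPlusPaths_symm (i j : Fin (n + 1)) :
    starPlusPaths n Ps i j = starPlusPaths n Ps j i := by
  unfold starPlusPaths starW
  congr 1
  · simp only [ne_comm, or_comm]
  · refine if_congr ?_ rfl rfl
    constructor <;> rintro ⟨a, b, hi, hj, l, hl, hab⟩ <;> exact ⟨b, a, hj, hi, l, hl, hab.symm⟩

lemma starPlusPaths_nonneg (i j : Fin (n + 1)) : 0 ≤ starPlusPaths n Ps i j := by
  unfold starPlusPaths starW
  positivity

lemma starPlusPaths_self (hPs : ∀ l ∈ Ps, l.Nodup) (i : Fin (n + 1)) :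
    starPlusPaths n Ps i i = 0 := by
  unfold starPlusPaths starW
  rw [if_neg (by simp), if_neg, add_zero]
  rintro ⟨a, b, rfl, hab, l, hl, hmem⟩
  obtain rfl := Fin.castSucc_injective n hab
  have hdup : [a, a] <:+: l := mem_zip_tail_iff_infix.mp (or_self_iff.mp hmem)
  simpa using (hPs l hl).sublist hdup.sublist

lemma one_le_starPlusPaths_last (a : Fin n) :
    1 ≤ starPlusPaths n Ps a.castSucc (Fin.last n) := by
  unfold starPlusPaths starW
  rw [if_pos ⟨(Fin.castSucc_lt_last a).ne, .inr rfl⟩]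
  split_ifs <;> norm_num

lemma one_le_starPlusPaths_of_infix {l : List (Fin n)} (hl : l ∈ Ps) {a b : Fin n}
    (hab : [a, b] <:+: l) : 1 ≤ starPlusPaths n Ps a.castSucc b.castSucc := by
  unfold starPlusPaths starW
  rw [if_pos (c := ∃ _, _) ⟨a, b, rfl, rfl, l, hl, .inl (mem_zip_tail_iff_infix.mpr hab)⟩]
  split_ifs <;> norm_num

lemma exists_two_neighbors_of_interior (hPs : ∀ l ∈ Ps, l.Nodup) {u : Fin n}
    (hu : ∃ p ∈ Ps, ∃ hp : p ≠ [], u ∈ p ∧ u ≠ p.head hp ∧ u ≠ p.getLast hp) :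
    ∃ a b : Fin n, a ≠ b ∧ 1 ≤ starPlusPaths n Ps u.castSucc a.castSucc ∧
      1 ≤ starPlusPaths n Ps u.castSucc b.castSucc := by
  obtain ⟨p, hp, hne, hup, hhead, hlast⟩ := hu
  obtain ⟨a, b, haub⟩ := exists_infix_of_ne_head_of_ne_getLast hup hne hhead hlast
  have hau : [a, u] <:+: p := .trans ⟨[], [b], rfl⟩ haub
  have hub : [u, b] <:+: p := .trans ⟨[a], [], rfl⟩ haub
  have hab : a ≠ b := by
    have hnodup := (hPs p hp).sublist haub.sublist
    simp only [List.nodup_cons, List.mem_cons] at hnodup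
    tauto
  refine ⟨a, b, hab, ?_, one_le_starPlusPaths_of_infix hp hub⟩
  rw [starPlusPaths_symm]
  exact one_le_starPlusPaths_of_infix hp hau

end StarPlusPaths

theorem stmt8_general (n : ℕ) (Ps : List (List (Fin n))) (hPs : ∀ l ∈ Ps, l.Nodup)
    (u v : Fin n)
    (hu : ∃ p ∈ Ps, ∃ hp : p ≠ [], u ∈ p ∧ u ≠ p.head hp ∧ u ≠ p.getLast hp)
    (x : Fin (n + 1) → ℝ)
    (hx : (lapG (starPlusPaths n Ps)).mulVec x =
      Pi.single u.castSucc 1 - Pi.single v.castSucc 1) :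
    (Pi.single u.castSucc 1 - Pi.single v.castSucc 1) ⬝ᵥ x ≤ 3 / 2 := by
  obtain ⟨a, b, hab, hua, hub⟩ := exists_two_neighbors_of_interior hPs hu
  have hcard : ({a.castSucc, b.castSucc} : Finset (Fin (n + 1))).card = 2 :=
    Finset.card_pair ((Fin.castSucc_injective n).ne hab)
  calc (Pi.single u.castSucc 1 - Pi.single v.castSucc 1) ⬝ᵥ x
      = x u.castSucc - x v.castSucc := by simp [sub_dotProduct]
    _ ≤ 1 + (1 + ({a.castSucc, b.castSucc} : Finset (Fin (n + 1))).card / 2 : ℝ)⁻¹ :=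
      sub_le_one_add_inv_of_common_neighbors starPlusPaths_symm (starPlusPaths_self hPs)
        starPlusPaths_nonneg (one_le_starPlusPaths_last u) (one_le_starPlusPaths_last v)
        (by simp [hua, hub, one_le_starPlusPaths_last]) hx
    _ = 3 / 2 := by norm_num [hcard]

theorem stmt8 (n : ℕ) (Ps : List (List (Fin n))) (hPs : IsPathCover n Ps)
    (u v : Fin n) (huv : u ≠ v)
    (hu : ∃ p ∈ Ps, ∃ hp : p ≠ [], u ∈ p ∧ u ≠ p.head hp ∧ u ≠ p.getLast hp)
    (hv : [v] ∈ Ps)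
    (x : Fin (n + 1) → ℝ)
    (hx : (lapG (starPlusPaths n Ps)).mulVec x =
      Pi.single u.castSucc 1 - Pi.single v.castSucc 1) :
    (Pi.single u.castSucc 1 - Pi.single v.castSucc 1) ⬝ᵥ x ≤ 3 / 2 :=
  stmt8_general n Ps (fun l hl => (hPs.1 l hl).2) u v hu x hx
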